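/- arXiv:2301.03917 — 3 statements merged into one kernel-verified Lean document; each statement's English description precedes it below -/
import Mathlib

section
/- Let p be a prime and let G be a finite p-group of order p^n with subgroups U and V such that G = UV, both U and V have index p in G, U is abelian, V is non-abelian of maximal class (i.e., V has nilpotency class n − 2, where |V| = p^(n−1)), and the center of G has order p. Then G has maximal class, i.e., the nilpotency class of G is n − 1. -/
/-- The nilpotency class of a group: the least `m` with `upperCentralSeries G m = ⊤`.
(For nilpotent groups this agrees with `Group.nilpotencyClass`.) -/
noncomputable def nilClass (G : Type*) [Group G] : ℕ :=
  sInf {m : ℕ | upperCentralSeries G m = ⊤}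

/-!
Let `v` be an element outside the abelian maximal subgroup `U`. Since `U` is normal and abelian,
`u ↦ ⁅u, v⁆` is an endomorphism of `U`; since `U` and `v` generate `G`, its kernel is `U ∩ Z(G)`.
It sends `U ∩ Z_{k+1}(G)` into `U ∩ Z_k(G)`, so the order of `U ∩ Z_k(G)` divides `|Z(G)| ^ k`.
Taking `k` to be the class of `G` shows that `|U| = p ^ (n - 1)` divides `p ^ k`, whereas a
nonabelian group of order `p ^ n` has class at most `n - 1`.
-/

open Subgroup
open scoped IsMulCommutative commutatorElement

theorem nilClass_eq_nilpotencyClass (G : Type*) [Group G] [Group.IsNilpotent G] :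
    nilClass G = Group.nilpotencyClass G := by
  have setOf_eq_Ici : {m : ℕ | Subgroup.upperCentralSeries G m = ⊤} =
      Set.Ici (Group.nilpotencyClass G) :=
    Set.ext fun _ => Subgroup.upperCentralSeries_eq_top_iff_nilpotencyClass_le
  exact (congrArg sInf setOf_eq_Ici).trans csInf_Ici

theorem card_comap_dvd_card_ker_mul {G H : Type*} [Group G] [Group H] (f : G →* H)
    (K : Subgroup H) : Nat.card (K.comap f) ∣ Nat.card f.ker * Nat.card K := by
  have card_comap :
      Nat.card (K.comap f) = Nat.card f.ker * Nat.card ((K.comap f).map f) := by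
    rw [← relIndex_ker, ← relIndex_bot_left f.ker, ← relIndex_bot_left (K.comap f),
      relIndex_mul_relIndex _ _ _ bot_le (ker_le_comap f K)]
  rw [card_comap]
  exact mul_dvd_mul_left _ (card_dvd_of_le (map_comap_le f K))

theorem isCoatom_of_prime_index {G : Type*} [Group G] {U : Subgroup G} (hU : U.index.Prime) :
    IsCoatom U := by
  refine ⟨fun h => hU.ne_one (index_eq_one.2 h), fun H hUH => ?_⟩
  have relIndex_ne_one : U.relIndex H ≠ 1 := fun h => hUH.not_ge (relIndex_eq_one.1 h)
  have index_mul : U.relIndex H * H.index = U.index := relIndex_mul_index hUH.le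
  rw [← index_mul, Nat.prime_mul_iff] at hU
  grind [index_eq_one]

section AbelianNormalSubgroup

variable {G : Type*} [Group G] {U : Subgroup G} [U.Normal] [IsMulCommutative U] {v : G}

variable (U v) in
/-- The endomorphism `u ↦ ⁅u, v⁆` of an abelian normal subgroup `U`, written as the quotient of the
identity by conjugation by `v` so that multiplicativity comes from commutativity of `U`. -/
noncomputable def commutatorHom : U →* U :=
  MonoidHom.id U / (MulAut.conjNormal v).toMonoidHom

theorem coe_commutatorHom_apply (u : U) : (commutatorHom U v u : G) = ⁅(u : G), v⁆ := by
  simp [commutatorHom, commutatorElement_def, div_eq_mul_inv, mul_assoc]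

theorem ker_commutatorHom (hv : U ⊔ zpowers v = ⊤) :
    (commutatorHom U v).ker = (center G).subgroupOf U := by
  ext u
  have mem_ker_iff : u ∈ (commutatorHom U v).ker ↔ Commute (u : G) v := by
    rw [MonoidHom.mem_ker, ← OneMemClass.coe_eq_one, coe_commutatorHom_apply,
      commutatorElement_eq_one_iff_commute]
  have le_centralizer : U ≤ centralizer {(u : G)} := fun x hx =>
    mem_centralizer_singleton_iff.2 (setLike_mul_comm hx u.2)
  rw [mem_ker_iff, mem_subgroupOf, ← SetLike.mem_coe, ← Set.singleton_subset_iff,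
    ← centralizer_eq_top_iff_subset, ← top_le_iff, ← hv, sup_le_iff, zpowers_le,
    mem_centralizer_singleton_iff]
  exact ⟨fun h => ⟨le_centralizer, h.symm.eq⟩, fun h => h.2.symm⟩

theorem upperCentralSeries_succ_subgroupOf_le_comap_commutatorHom (k : ℕ) :
    (Subgroup.upperCentralSeries G (k + 1)).subgroupOf U ≤
      ((Subgroup.upperCentralSeries G k).subgroupOf U).comap (commutatorHom U v) := by
  intro u hu
  rw [mem_comap, mem_subgroupOf, coe_commutatorHom_apply]
  exact Subgroup.mem_upperCentralSeries_succ_iff.1 hu v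

theorem card_upperCentralSeries_subgroupOf_dvd_card_center_pow (hv : U ⊔ zpowers v = ⊤) (k : ℕ) :
    Nat.card ((Subgroup.upperCentralSeries G k).subgroupOf U) ∣ Nat.card (center G) ^ k := by
  induction k with
  | zero => simp
  | succ k ih =>
    have card_ker_dvd : Nat.card (commutatorHom U v).ker ∣ Nat.card (center G) := by
      rw [ker_commutatorHom hv]
      exact card_comap_dvd_of_injective _ _ U.subtype_injective
    calc Nat.card ((Subgroup.upperCentralSeries G (k + 1)).subgroupOf U)
        ∣ Nat.card (((Subgroup.upperCentralSeries G k).subgroupOf U).comap (commutatorHom U v)) :=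
          card_dvd_of_le (upperCentralSeries_succ_subgroupOf_le_comap_commutatorHom k)
      _ ∣ Nat.card (commutatorHom U v).ker *
            Nat.card ((Subgroup.upperCentralSeries G k).subgroupOf U) :=
          card_comap_dvd_card_ker_mul _ _
      _ ∣ Nat.card (center G) * Nat.card (center G) ^ k := mul_dvd_mul card_ker_dvd ih
      _ = Nat.card (center G) ^ (k + 1) := (pow_succ' _ _).symm

end AbelianNormalSubgroup

theorem card_dvd_card_center_pow_nilpotencyClass {G : Type*} [Group G] [Group.IsNilpotent G]
    {U : Subgroup G} [IsMulCommutative U] (hU : IsCoatom U) :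
    Nat.card U ∣ Nat.card (center G) ^ Group.nilpotencyClass G := by
  have : U.Normal :=
    NormalizerCondition.normal_of_coatom U Group.normalizerCondition_of_isNilpotent hU
  obtain ⟨v, -, hv⟩ := SetLike.exists_of_lt hU.lt_top
  have sup_eq_top : U ⊔ zpowers v = ⊤ :=
    codisjoint_iff.1 (hU.not_le_iff_codisjoint.1 (by rwa [zpowers_le]))
  simpa [subgroupOf] using
    card_upperCentralSeries_subgroupOf_dvd_card_center_pow sup_eq_top (Group.nilpotencyClass G)

theorem isMulCommutative_of_card_eq_prime_pow_of_le_two {G : Type*} [Group G] {p n : ℕ}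
    [Fact p.Prime] (hG : Nat.card G = p ^ n) (hn : n ≤ 2) : IsMulCommutative G := by
  obtain hn | rfl : n ≤ 1 ∨ n = 2 := by lia
  · have : IsCyclic G := isCyclic_of_card_dvd_prime (p := p) (by
      simpa only [hG, pow_one] using pow_dvd_pow p hn)
    infer_instance
  · exact IsPGroup.isMulCommutative_of_card_eq_prime_sq hG

theorem exists_lt_card_quotient_center_eq_prime_pow {G : Type*} [Group G] {p n : ℕ}
    [hp : Fact p.Prime] (hG : Nat.card G = p ^ n) (hn : 0 < n) :
    ∃ m < n, Nat.card (G ⧸ center G) = p ^ m := by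
  obtain ⟨k, hk, hZ⟩ := IsPGroup.card_center_eq_prime_pow hG hn
  have card_mul := card_eq_card_quotient_mul_card_subgroup (center G)
  obtain ⟨m, -, hm⟩ := (Nat.dvd_prime_pow hp.out).1 (hG ▸ Dvd.intro _ card_mul.symm)
  rw [hG, hm, hZ, ← pow_add] at card_mul
  have := Nat.pow_right_injective hp.out.two_le card_mul
  exact ⟨m, by lia, hm⟩

-- The maximum with `1` accounts for groups of order `p`, whose class is `1` and not `0`.
theorem nilpotencyClass_le_max_one_of_card_eq_prime_pow {G : Type*} [Group G] {p n : ℕ}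
    [hp : Fact p.Prime] (hG : Nat.card G = p ^ n) :
    Group.nilpotencyClass G ≤ max 1 (n - 1) := by
  induction n using Nat.strong_induction_on generalizing G with
  | h n ih =>
    have : Finite G := Nat.finite_of_card_ne_zero (hG ▸ pow_ne_zero n hp.out.ne_zero)
    have : Group.IsNilpotent G := (IsPGroup.of_card hG).isNilpotent
    obtain hn | hn := le_or_gt n 2
    · exact le_max_of_le_left (Group.IsNilpotent.nilpotencyClass_le_one_iff.2
        (isMulCommutative_of_card_eq_prime_pow_of_le_two hG hn))
    · obtain ⟨m, hm, hQ⟩ := exists_lt_card_quotient_center_eq_prime_pow hG (by lia)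
      have class_quotient_le := ih m hm hQ
      rw [Group.nilpotencyClass_quotient_center] at class_quotient_le
      lia

theorem stmt5_general {G : Type*} [Group G] {p n : ℕ} (hp : p.Prime) (hG : Nat.card G = p ^ n)
    (hGna : ¬ IsMulCommutative G) (U : Subgroup G) (hUi : U.index = p) [IsMulCommutative U]
    (hZ : Nat.card (center G) = p) : nilClass G = n - 1 := by
  have : Fact p.Prime := ⟨hp⟩
  have : Finite G := Nat.finite_of_card_ne_zero (hG ▸ pow_ne_zero n hp.ne_zero)
  have : Group.IsNilpotent G := (IsPGroup.of_card hG).isNilpotent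
  have one_lt_class : 1 < Group.nilpotencyClass G :=
    not_le.1 (mt Group.IsNilpotent.nilpotencyClass_le_one_iff.1 hGna)
  have class_le : Group.nilpotencyClass G ≤ max 1 (n - 1) :=
    nilpotencyClass_le_max_one_of_card_eq_prime_pow hG
  have order_dvd : p ^ n ∣ p ^ (Group.nilpotencyClass G + 1) := by
    have card_dvd := card_dvd_card_center_pow_nilpotencyClass (isCoatom_of_prime_index (hUi ▸ hp))
    rw [hZ] at card_dvd
    rw [← hG, ← U.card_mul_index, hUi, pow_succ]
    exact mul_dvd_mul_right card_dvd p
  have le_class_succ : n ≤ Group.nilpotencyClass G + 1 :=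
    (Nat.pow_dvd_pow_iff_le_right hp.one_lt).1 order_dvd
  rw [nilClass_eq_nilpotencyClass]
  lia

/-- Let `G` be a `p`-group of order `p^n`, `G = UV` with `U, V` maximal
(index `p`), `U` abelian, `V` non-abelian of maximal class (class `n - 2`, as `|V| = p^(n-1)`),
and `|Z(G)| = p`. Then `G` has maximal class, i.e. nilpotency class `n - 1`. -/
theorem stmt5 {G : Type*} [Group G] [Fintype G] {p n : ℕ} (hp : p.Prime)
    (hG : Fintype.card G = p ^ n) (U V : Subgroup G)
    (hUV : ∀ g : G, ∃ u ∈ U, ∃ v ∈ V, g = u * v)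
    (hUi : U.index = p) (hVi : V.index = p)
    (hUab : ∀ x ∈ U, ∀ y ∈ U, x * y = y * x)
    (hVna : ¬ ∀ x ∈ V, ∀ y ∈ V, x * y = y * x)
    (hVmc : nilClass V = n - 2)
    (hZ : Nat.card (Subgroup.center G) = p) :
    nilClass G = n - 1 := by
  have : IsMulCommutative U := isMulCommutative_iff.2 fun x y => Subtype.ext (hUab x x.2 y y.2)
  exact stmt5_general hp (Nat.card_eq_fintype_card.trans hG)
    (fun _ => hVna fun x _ y _ => mul_comm' x y) U hUi hZ
end

section
/- Let G be a finite group and let χ be a faithful irreducible complex character of G. Then χ vanishes at every element of Z₂(G) − Z(G), where Z(G) is the center and Z₂(G) is the second center of G. -/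
open CategoryTheory

/-!
Let `g ∈ Z₂(G)` fail to commute with `y`. The commutator `⁅g, y⁆` is central, so by Schur's lemma
it acts as a scalar `c`, and `c ≠ 1` because the representation is faithful. As
`g = ⁅g, y⁆ * (y * g * y⁻¹)` and `χ` is a class function, `χ g = c * χ g`, whence `χ g = 0`.
-/

open scoped commutatorElement

theorem commutatorElement_mem_center_of_mem_upperCentralSeries_two {G : Type*} [Group G] {g : G}
    (hg : g ∈ Subgroup.upperCentralSeries G 2) (y : G) : ⁅g, y⁆ ∈ Subgroup.center G := by
  rw [← Subgroup.upperCentralSeries_one]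
  exact Subgroup.mem_upperCentralSeries_succ_iff.mp hg y

section Representation

variable {k G V : Type*} [Field k] [AddCommGroup V] [Module k V]

theorem character_mul_of_eq_smul_one [Monoid G] (ρ : Representation k G V) {z : G} {c : k}
    (hz : ρ z = c • 1) (g : G) : ρ.character (z * g) = c * ρ.character g := by
  simp only [Representation.character, map_mul, hz, smul_mul_assoc, one_mul, map_smul, smul_eq_mul]

theorem character_eq_zero_of_commutatorElement_eq_smul_one [Group G] (ρ : Representation k G V)
    {g y : G} {c : k} (hgy : ρ ⁅g, y⁆ = c • 1) (hc : c ≠ 1) : ρ.character g = 0 := by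
  have char_eq : ρ.character g = c * ρ.character g :=
    calc ρ.character g = ρ.character (⁅g, y⁆ * (y * g * y⁻¹)) := by
          rw [commutatorElement_def]; group
      _ = c * ρ.character (y * g * y⁻¹) := character_mul_of_eq_smul_one ρ hgy _
      _ = c * ρ.character g := by rw [Representation.char_conj]
  exact (mul_left_eq_self₀.mp char_eq.symm).resolve_left hc

end Representation

section FDRep

variable {k G : Type*} [Field k] [IsAlgClosed k]

theorem exists_ρ_eq_smul_one_of_mem_center [Monoid G] (V : FDRep k G) [Simple V] {z : G}
    (hz : z ∈ Submonoid.center G) : ∃ c : k, V.ρ z = c • 1 := by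
  let zEnd : V ⟶ V :=
    { hom := Action.ρ V z
      comm y := by
        change Action.ρ V z * Action.ρ V y = Action.ρ V y * Action.ρ V z
        rw [← map_mul, ← map_mul, Submonoid.mem_center_iff.mp hz y] }
  obtain ⟨c, hc⟩ := endomorphism_simple_eq_smul_id k zEnd
  exact ⟨c, congrArg (fun f : V ⟶ V ↦ f.hom.hom.hom) hc.symm⟩

theorem stmt8_general [Group G] (V : FDRep k G) [Simple V] (hfaithful : Function.Injective V.ρ)
    {g : G} (hg : g ∈ Subgroup.upperCentralSeries G 2) (hgc : g ∉ Subgroup.center G) :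
    V.character g = 0 := by
  obtain ⟨y, hy⟩ : ∃ y, y * g ≠ g * y := by
    simpa only [Subgroup.mem_center_iff, not_forall] using hgc
  obtain ⟨c, hc⟩ := exists_ρ_eq_smul_one_of_mem_center V
    (commutatorElement_mem_center_of_mem_upperCentralSeries_two hg y)
  refine character_eq_zero_of_commutatorElement_eq_smul_one V.ρ hc fun hc_one ↦ hy ?_
  have commutator_eq_one : ⁅g, y⁆ = 1 := hfaithful (by rw [hc, hc_one, one_smul, map_one])
  exact (commutatorElement_eq_one_iff_mul_comm.mp commutator_eq_one).symm

end FDRep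

/-- If `χ` is a faithful irreducible complex character of a finite group `G`,
then `χ` vanishes at every element of `Z₂(G) - Z(G)`. -/
theorem stmt8 {G : Type} [Group G] [Fintype G]
    (V : FDRep ℂ G) (hV : Simple V)
    (hfaithful : Function.Injective ⇑V.ρ) :
    ∀ g ∈ upperCentralSeries G 2, g ∉ Subgroup.center G → V.character g = 0 :=
  fun _ hg hgc ↦ stmt8_general V hfaithful hg hgc
end

section
/- Let p be a prime, let G be a non-abelian finite p-group of order p^n, and let χ be a faithful irreducible complex character of G. Then χ vanishes at exactly p^n − p^(n−1) + p^2 − p elements of G if and only if the set of elements at which χ vanishes is a union of exactly p^2 − 1 conjugacy classes of G. -/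
open CategoryTheory

/-!
If `g * x * g⁻¹ = z * x` with `z ≠ 1` central, then `χ x = ω z * χ x`, where `ω` is the central
character; `ω` is injective because `χ` is faithful, so `χ x = 0`. Injectivity of `ω` also makes the
center `Z` cyclic.

Let `u * Z` be a central element of order `p` of `G ⧸ Z` and let `M` be the centralizer of `u`. As
`Z` is cyclic, `M` has index `p`. The relation above holds at every element outside `M` and at every
noncentral element of `⟨u, Z⟩ ≤ M`, so `χ` vanishes on both sets. The first set has
`p ^ n - p ^ (n - 1)` elements, in classes of size at most `p ^ (n - 2)`; the second has
`(p - 1) * |Z|` elements, in classes of size `p`. Since `p ≤ |Z|`, there are at least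
`p ^ n - p ^ (n - 1) + p ^ 2 - p` zeros and at least `p ^ 2 - 1` classes of zeros, and equality in
either bound forces `|Z| = p` and that there are no other zeros. Conversely, when this holds, no
element of `M` outside `⟨u, Z⟩` satisfies the relation, which makes `M` abelian, and then the
classes outside `M` have size exactly `p ^ (n - 2)`, so that both bounds are attained.
-/

open Subgroup
open scoped commutatorElement

section ConjugacyClasses

variable {G : Type*} [Group G]

theorem ncard_carrier_mk [Finite G] (g : G) :
    (ConjClasses.mk g).carrier.ncard = (centralizer {g}).index := by
  rw [← ConjAct.orbit_eq_carrier_conjClasses, ← MulAction.index_stabilizer]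
  have hcard : Nat.card (MulAction.stabilizer (ConjAct G) g) = Nat.card (centralizer {g}) :=
    (nat_card_centralizer_nat_card_stabilizer g).symm
  refine Nat.eq_of_mul_eq_mul_left (Nat.card_pos (α := centralizer {g})) ?_
  rw [card_mul_index, ← hcard, card_mul_index]
  rfl

theorem centralizer_singleton_eq_top_iff {g : G} : centralizer {g} = ⊤ ↔ g ∈ center G := by
  rw [centralizer_eq_top_iff_subset, Set.singleton_subset_iff, SetLike.mem_coe]

/-- `S` is a union of conjugacy classes, so that its elements can be counted class by class. -/
def IsConjInvariant (S : Set G) : Prop :=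
  ∀ ⦃x y : G⦄, IsConj x y → x ∈ S → y ∈ S

namespace IsConjInvariant

variable {S T : Set G}

theorem coe_normal (N : Subgroup G) [hN : N.Normal] : IsConjInvariant (N : Set G) := by
  rintro x y hxy hx
  obtain ⟨g, rfl⟩ := isConj_iff.mp hxy
  exact hN.conj_mem x hx g

theorem compl (hS : IsConjInvariant S) : IsConjInvariant Sᶜ :=
  fun _ _ hxy hx hy ↦ hx (hS hxy.symm hy)

theorem union (hS : IsConjInvariant S) (hT : IsConjInvariant T) : IsConjInvariant (S ∪ T) :=
  fun _ _ hxy ↦ Or.imp (hS hxy) (hT hxy)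

theorem mem_of_mk_mem_image (hS : IsConjInvariant S) {x : G}
    (hx : ConjClasses.mk x ∈ ConjClasses.mk '' S) : x ∈ S := by
  obtain ⟨y, hy, hyx⟩ := hx
  exact hS (ConjClasses.mk_eq_mk_iff_isConj.mp hyx) hy

theorem disjoint_image_mk (hS : IsConjInvariant S) (hST : Disjoint S T) :
    Disjoint (ConjClasses.mk '' S) (ConjClasses.mk '' T) := by
  rw [Set.disjoint_right]
  rintro _ ⟨x, hxT, rfl⟩ hxS
  exact Set.disjoint_left.mp hST (hS.mem_of_mk_mem_image hxS) hxT

theorem mul_ncard_image_mk_le [Finite G] {c : ℕ} (hS : IsConjInvariant S)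
    (hc : ∀ x ∈ S, c ≤ (ConjClasses.mk x).carrier.ncard) :
    c * (ConjClasses.mk '' S).ncard ≤ S.ncard := by
  classical
  have := Fintype.ofFinite G
  rw [Set.ncard_eq_toFinset_card' S, Set.ncard_eq_toFinset_card', Set.toFinset_image]
  refine Finset.mul_card_image_le_card _ _ fun C hC ↦ ?_
  obtain ⟨x, hx, rfl⟩ := Finset.mem_image.mp hC
  rw [Set.mem_toFinset] at hx
  refine (hc x hx).trans ?_
  rw [← Set.ncard_coe_finset]
  refine Set.ncard_le_ncard fun y hy ↦ ?_
  rw [ConjClasses.mem_carrier_iff_mk_eq] at hy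
  simpa [hy] using hS.mem_of_mk_mem_image ⟨x, hx, hy.symm⟩

end IsConjInvariant

theorem ncard_le_mul_ncard_image_mk [Finite G] {S : Set G} {c : ℕ}
    (hc : ∀ x ∈ S, (ConjClasses.mk x).carrier.ncard ≤ c) :
    S.ncard ≤ c * (ConjClasses.mk '' S).ncard := by
  classical
  have := Fintype.ofFinite G
  rw [Set.ncard_eq_toFinset_card' S, Set.ncard_eq_toFinset_card', Set.toFinset_image]
  refine Finset.card_le_mul_card_image _ _ fun C hC ↦ ?_
  obtain ⟨x, hx, rfl⟩ := Finset.mem_image.mp hC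
  refine le_trans ?_ (hc x (Set.mem_toFinset.mp hx))
  rw [← Set.ncard_coe_finset]
  refine Set.ncard_le_ncard fun y hy ↦ ?_
  rw [ConjClasses.mem_carrier_iff_mk_eq]
  exact (Finset.mem_filter.mp hy).2

end ConjugacyClasses

section CentralShifts

variable {G : Type*} [Group G]

/-- `x` is conjugate to `z * x` for some central `z ≠ 1`, namely `z = ⁅g, x⁆`. Faithful irreducible
characters vanish at such elements. -/
def IsCentrallyShifted (x : G) : Prop :=
  ∃ g : G, ⁅g, x⁆ ∈ center G ∧ ⁅g, x⁆ ≠ 1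

theorem commutatorElement_mem_center_comm {g x : G} :
    ⁅g, x⁆ ∈ center G ↔ ⁅x, g⁆ ∈ center G := by
  rw [← commutatorElement_inv, inv_mem_iff]

theorem commutatorElement_pow_eq_one {v g : G} {m : ℕ} (hvg : ⁅g, v⁆ ∈ center G)
    (hvm : v ^ m ∈ center G) : ⁅g, v⁆ ^ m = 1 := by
  have hcomm : Commute ⁅g, v⁆ v := (mem_center_iff.mp hvg v).symm
  have hconj : g * v * g⁻¹ = ⁅g, v⁆ * v := by rw [commutatorElement_def]; group
  have hpow : ⁅g, v⁆ ^ m * v ^ m = v ^ m := by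
    rw [← hcomm.mul_pow, ← hconj, conj_pow, mem_center_iff.mp hvm g, mul_inv_cancel_right]
  exact mul_eq_right.mp hpow

theorem exists_mem_notMem_commutatorElement_mem [Group.IsNilpotent G] {A B : Subgroup G}
    [hB : B.Normal] (hBA : ¬ B ≤ A) : ∃ x ∈ B, x ∉ A ∧ ∀ g, ⁅x, g⁆ ∈ A := by
  have hexists : ∃ i, ¬ B ⊓ Subgroup.upperCentralSeries G i ≤ A :=
    ⟨Group.nilpotencyClass G, by rwa [Subgroup.upperCentralSeries_nilpotencyClass, inf_top_eq]⟩
  classical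
  obtain ⟨i, hi⟩ : ∃ i, Nat.find hexists = i + 1 :=
    Nat.exists_eq_succ_of_ne_zero fun h0 ↦ Nat.find_spec hexists (by simp [h0])
  obtain ⟨x, ⟨hxB, hxi⟩, hxA⟩ := SetLike.not_le_iff_exists.mp (Nat.find_spec hexists)
  have hlower : B ⊓ Subgroup.upperCentralSeries G i ≤ A :=
    not_not.mp (Nat.find_min hexists (hi ▸ Nat.lt_succ_self i))
  refine ⟨x, hxB, hxA, fun g ↦ hlower ⟨?_, ?_⟩⟩
  · rw [commutatorElement_def, mul_assoc, mul_assoc, ← mul_assoc g]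
    exact B.mul_mem hxB (hB.conj_mem _ (B.inv_mem hxB) g)
  · rw [hi] at hxi
    exact Subgroup.mem_upperCentralSeries_succ_iff.mp hxi g

theorem commutatorElement_mul_left_of_commute {a x y : G} (hx : Commute a x) (hy : Commute a y) :
    ⁅a * x, y⁆ = ⁅x, y⁆ := by
  rw [hx.eq, commutatorElement_def, commutatorElement_def, mul_assoc x, hy.eq]
  group

theorem commutatorElement_mul_right_of_commute {x y b : G} (hb : Commute b x) :
    ⁅x, y * b⁆ = ⁅x, y⁆ := by
  have hconj : b * x⁻¹ * b⁻¹ = x⁻¹ := by rw [hb.inv_right.eq, mul_inv_cancel_right]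
  calc ⁅x, y * b⁆ = x * y * (b * x⁻¹ * b⁻¹) * y⁻¹ := by rw [commutatorElement_def]; group
    _ = ⁅x, y⁆ := by rw [hconj, commutatorElement_def]

theorem le_centralizer_of_forall_isCentrallyShifted [Group.IsNilpotent G] {M : Subgroup G}
    [hM : M.Normal]
    (hshift : ∀ x ∈ M, IsCentrallyShifted x → x ∈ centralizer (M : Set G)) :
    M ≤ centralizer (M : Set G) := by
  -- `x ∈ M` is central modulo `centralizer M` without lying in it, and `m ∈ M` is central modulo
  -- `centralizer {x}` without lying in it; this makes `⁅x, m⁻¹⁆ ≠ 1` central in `G`.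
  by_contra hnonabelian
  obtain ⟨x, hxM, hx, hxg⟩ := exists_mem_notMem_commutatorElement_mem hnonabelian
  have hMx : ¬ M ≤ centralizer {x} := fun h ↦ hx <| mem_centralizer_iff.mpr fun m hm ↦
    mem_centralizer_singleton_iff.mp (h hm)
  obtain ⟨m, hmM, hm, hmg⟩ := exists_mem_notMem_commutatorElement_mem hMx
  have hcentral : ⁅x, m⁻¹⁆ ∈ center G := by
    refine mem_center_iff.mpr fun g ↦ mul_inv_eq_iff_eq_mul.mp ?_
    have ha : ⁅g, x⁆ ∈ centralizer (M : Set G) := by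
      rw [← commutatorElement_inv]; exact inv_mem (hxg g)
    have ha_comm : ∀ y ∈ M, Commute ⁅g, x⁆ y := fun y hy ↦ (mem_centralizer_iff.mp ha y hy).symm
    have hb_comm : Commute ⁅m, g⁆ x := mem_centralizer_singleton_iff.mp (hmg g)
    calc g * ⁅x, m⁻¹⁆ * g⁻¹ = ⁅g * x * g⁻¹, g * m⁻¹ * g⁻¹⁆ := by
          simp only [commutatorElement_def]; group
      _ = ⁅⁅g, x⁆ * x, g * m⁻¹ * g⁻¹⁆ := by
          congr 1; rw [commutatorElement_def]; group
      _ = ⁅x, g * m⁻¹ * g⁻¹⁆ := commutatorElement_mul_left_of_commute (ha_comm x hxM)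
          (ha_comm _ (hM.conj_mem _ (inv_mem hmM) g))
      _ = ⁅x, m⁻¹ * ⁅m, g⁆⁆ := by
          congr 1; rw [commutatorElement_def]; group
      _ = ⁅x, m⁻¹⁆ := commutatorElement_mul_right_of_commute hb_comm
  refine hx (hshift x hxM ⟨m⁻¹, commutatorElement_mem_center_comm.mpr hcentral, fun h ↦ hm ?_⟩)
  rw [← inv_mem_iff, mem_centralizer_singleton_iff]
  exact commutatorElement_eq_one_iff_mul_comm.mp h

end CentralShifts

section PGroups

variable {G : Type*} [Group G] [Finite G] {p n : ℕ} [hp : Fact p.Prime]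

theorem mul_card_le_card_of_lt (hG : IsPGroup p G) {H K : Subgroup G} (hHK : H < K) :
    p * Nat.card H ≤ Nat.card K := by
  obtain ⟨j, hj⟩ := (hG.to_subgroup K).index (H.subgroupOf K)
  have hj0 : j ≠ 0 := by
    rintro rfl
    rw [pow_zero, index_eq_one, subgroupOf_eq_top] at hj
    exact hHK.not_ge hj
  rw [← card_mul_index (H.subgroupOf K), Nat.card_congr (subgroupOfEquivOfLe hHK.le).toEquiv, hj,
    mul_comm]
  exact Nat.mul_le_mul_left _ (Nat.le_self_pow hj0 p)

theorem le_card_center_of_notMem_center (hG : IsPGroup p G) {y : G} (hy : y ∉ center G) :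
    p ≤ Nat.card (center G) := by
  have : Nontrivial G := ⟨y, 1, ne_of_mem_of_not_mem (one_mem _) hy |>.symm⟩
  simpa using mul_card_le_card_of_lt hG hG.bot_lt_center

theorem sq_mul_ncard_carrier_le (hG : IsPGroup p G) {y : G} (hy : y ∉ center G) :
    p ^ 2 * (ConjClasses.mk y).carrier.ncard ≤ Nat.card G := by
  have hlt : center G < centralizer {y} :=
    (center_le_centralizer _).lt_of_not_ge fun h ↦ hy (h (mem_centralizer_singleton_iff.mpr rfl))
  have hsq : p ^ 2 ≤ Nat.card (centralizer {y}) :=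
    calc p ^ 2 = p * p := sq p
      _ ≤ p * Nat.card (center G) := Nat.mul_le_mul_left _ (le_card_center_of_notMem_center hG hy)
      _ ≤ Nat.card (centralizer {y}) := mul_card_le_card_of_lt hG hlt
  rw [ncard_carrier_mk, ← card_mul_index (centralizer {y})]
  exact Nat.mul_le_mul_right _ hsq

theorem two_le_of_notMem_center (hcard : Nat.card G = p ^ n) {y : G} (hy : y ∉ center G) :
    2 ≤ n := by
  have hpos : 0 < (ConjClasses.mk y).carrier.ncard :=
    (Set.ncard_pos).mpr ⟨y, ConjClasses.mem_carrier_mk⟩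
  rw [← Nat.pow_le_pow_iff_right hp.out.one_lt, ← hcard]
  exact (Nat.le_mul_of_pos_right _ hpos).trans (sq_mul_ncard_carrier_le (.of_card hcard) hy)

theorem ncard_carrier_le_of_notMem_center (hcard : Nat.card G = p ^ n) {y : G}
    (hy : y ∉ center G) : (ConjClasses.mk y).carrier.ncard ≤ p ^ (n - 2) := by
  refine le_of_mul_le_mul_left ?_ (Nat.pow_pos (n := 2) hp.out.pos)
  rw [pow_mul_pow_sub p (two_le_of_notMem_center hcard hy), ← hcard]
  exact sq_mul_ncard_carrier_le (.of_card hcard) hy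

theorem normal_of_index_eq_prime (hG : IsPGroup p G) {M : Subgroup G} (hM : M.index = p) :
    M.Normal := by
  obtain ⟨m, hm⟩ := IsPGroup.iff_card.mp hG
  have hm0 : m ≠ 0 := by
    rintro rfl
    have hdvd := M.index_dvd_card
    rw [hM, hm, pow_zero, Nat.dvd_one] at hdvd
    exact hp.out.ne_one hdvd
  exact normal_of_index_eq_minFac_card (by rw [hM, hm, hp.out.pow_minFac hm0])

end PGroups

section AbelianMaximalSubgroup

variable {G : Type*} [Group G] {M : Subgroup G}

theorem eq_top_of_index_prime_of_lt (hM : M.index.Prime) {K : Subgroup G} (hMK : M < K) :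
    K = ⊤ := by
  rw [← index_eq_one]
  refine (hM.eq_one_or_self_of_dvd _ (index_dvd_of_le hMK.le)).resolve_right fun hK ↦ ?_
  have hmul := relIndex_mul_index hMK.le
  rw [hK, Nat.mul_eq_right hM.ne_zero, relIndex_eq_one] at hmul
  exact hMK.not_ge hmul

theorem centralizer_inf_le_center (hM : M.index.Prime) (hcomm : M ≤ centralizer (M : Set G))
    {y : G} (hy : y ∉ M) : centralizer {y} ⊓ M ≤ center G := by
  rintro c ⟨hcy, hcM⟩
  replace hcy : c * y = y * c := mem_centralizer_singleton_iff.mp hcy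
  refine centralizer_singleton_eq_top_iff.mp (eq_top_of_index_prime_of_lt hM ?_)
  refine lt_of_le_not_ge (fun m hm ↦ ?_) fun h ↦ hy (h ?_)
  · exact mem_centralizer_singleton_iff.mpr (mem_centralizer_iff.mp (hcomm hcM) m hm)
  · exact mem_centralizer_singleton_iff.mpr hcy.symm

theorem index_center_le_ncard_carrier_mul_index [Finite G] (hM : M.index.Prime)
    (hcomm : M ≤ centralizer (M : Set G)) {y : G} (hy : y ∉ M) :
    (center G).index ≤ (ConjClasses.mk y).carrier.ncard * M.index := by
  rw [ncard_carrier_mk]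
  exact (index_antitone (centralizer_inf_le_center hM hcomm hy)).trans index_inf_le

end AbelianMaximalSubgroup

theorem pow_sub_pow_sub_one_eq_mul (p : ℕ) {n : ℕ} (hn : 2 ≤ n) :
    p ^ n - p ^ (n - 1) = p ^ (n - 2) * (p * (p - 1)) := by
  obtain ⟨k, rfl⟩ := Nat.exists_eq_add_of_le' hn
  rw [Nat.mul_sub_one, Nat.mul_sub]
  simp [pow_succ, mul_assoc]

/-- The image of `v` in `G ⧸ center G` is a central element of order `p`. In a finite `p`-group with
cyclic center such an element has exactly `p` conjugates. -/
structure IsCentralOfOrderModCenter {G : Type*} [Group G] (p : ℕ) (v : G) : Prop where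
  mk_mem_center : (v : G ⧸ center G) ∈ center (G ⧸ center G)
  orderOf_mk : orderOf (v : G ⧸ center G) = p

theorem exists_isCentralOfOrderModCenter {G : Type*} [Group G] [Finite G] {p : ℕ}
    [hp : Fact p.Prime] (hG : IsPGroup p G) (hna : center G ≠ ⊤) :
    ∃ u : G, IsCentralOfOrderModCenter p u := by
  have : Nontrivial (G ⧸ center G) := QuotientGroup.nontrivial_iff.mpr hna
  have hZ : IsPGroup p (center (G ⧸ center G)) := (hG.to_quotient _).to_subgroup _
  have : Nontrivial (center (G ⧸ center G)) := (hG.to_quotient _).center_nontrivial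
  have hdvd : p ∣ Nat.card (center (G ⧸ center G)) :=
    hZ.card_eq_or_dvd.resolve_left Finite.one_lt_card.ne'
  obtain ⟨⟨x, hx⟩, hxp⟩ := exists_prime_orderOf_dvd_card' p hdvd
  obtain ⟨u, rfl⟩ := QuotientGroup.mk_surjective x
  exact ⟨u, hx, by rwa [orderOf_mk] at hxp⟩

namespace IsCentralOfOrderModCenter

variable {G : Type*} [Group G] {p : ℕ} {u v : G}

theorem commutatorElement_mem_center (hv : IsCentralOfOrderModCenter p v) (g : G) :
    ⁅g, v⁆ ∈ center G := by
  rw [← QuotientGroup.eq_one_iff, ← QuotientGroup.mk'_apply, map_commutatorElement,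
    commutatorElement_eq_one_iff_mul_comm]
  exact mem_center_iff.mp hv.mk_mem_center g

theorem pow_mem_center (hv : IsCentralOfOrderModCenter p v) : v ^ p ∈ center G := by
  rw [← QuotientGroup.eq_one_iff, QuotientGroup.mk_pow, ← hv.orderOf_mk, pow_orderOf_eq_one]

theorem isCentrallyShifted_of_notMem_centralizer (hu : IsCentralOfOrderModCenter p u) {x : G}
    (hx : x ∉ centralizer {u}) : IsCentrallyShifted x := by
  have hcentral := commutatorElement_mem_center_comm.mpr (hu.commutatorElement_mem_center x)
  refine ⟨u, hcentral, fun h ↦ hx ?_⟩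
  exact mem_centralizer_singleton_iff.mpr (commutatorElement_eq_one_iff_mul_comm.mp h).symm

variable [hp : Fact p.Prime]

theorem notMem_center (hv : IsCentralOfOrderModCenter p v) : v ∉ center G := by
  rw [← QuotientGroup.eq_one_iff, ← orderOf_eq_one_iff, hv.orderOf_mk]
  exact hp.out.ne_one

theorem isCentrallyShifted (hv : IsCentralOfOrderModCenter p v) : IsCentrallyShifted v := by
  obtain ⟨g, hg⟩ : ∃ g, g * v ≠ v * g := by
    simpa only [mem_center_iff, not_forall] using hv.notMem_center
  exact ⟨g, hv.commutatorElement_mem_center g, mt commutatorElement_eq_one_iff_mul_comm.mp hg⟩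

theorem ncard_carrier_le [Finite G] [IsCyclic (center G)] (hv : IsCentralOfOrderModCenter p v) :
    (ConjClasses.mk v).carrier.ncard ≤ p := by
  classical
  have := Fintype.ofFinite G
  have htorsion : {z : center G | z ^ p = 1}.ncard ≤ p := by
    rw [Set.ncard_eq_toFinset_card', Set.toFinset_ofPred]
    exact IsCyclic.card_pow_eq_one_le hp.out.pos
  refine le_trans ?_ ((Set.ncard_image_le (f := fun z : center G ↦ z * v)).trans htorsion)
  refine Set.ncard_le_ncard fun w hw ↦ ?_
  obtain ⟨g, rfl⟩ := isConj_iff.mp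
    (ConjClasses.mk_eq_mk_iff_isConj.mp (ConjClasses.mem_carrier_iff_mk_eq.mp hw).symm)
  have hcentral := hv.commutatorElement_mem_center g
  refine ⟨⟨⁅g, v⁆, hcentral⟩, Subtype.ext ?_, by simp [commutatorElement_def]⟩
  exact commutatorElement_pow_eq_one hcentral hv.pow_mem_center

theorem index_centralizer [Finite G] [IsCyclic (center G)] (hG : IsPGroup p G)
    (hv : IsCentralOfOrderModCenter p v) : (centralizer {v}).index = p := by
  refine le_antisymm (ncard_carrier_mk v ▸ hv.ncard_carrier_le) ?_
  obtain ⟨j, hj⟩ := hG.index (centralizer {v})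
  have hj0 : j ≠ 0 := by
    rintro rfl
    rw [pow_zero, index_eq_one, centralizer_singleton_eq_top_iff] at hj
    exact hv.notMem_center hj
  exact hj ▸ Nat.le_self_pow hj0 p

end IsCentralOfOrderModCenter

section ForcedZeros

variable {G : Type*} [Group G] {p n : ℕ} {u : G}

/-- The elements that do not commute with `u`. When `u` is central modulo the center, faithful
irreducible characters vanish on them. -/
def outerZeros (u : G) : Set G :=
  (centralizer {u} : Set G)ᶜ

/-- The elements of `⟨u, center G⟩` outside `center G`, written as a preimage from `G ⧸ center G`.
When `u` is central modulo the center of prime order, faithful irreducible characters vanish on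
them. -/
def innerZeros (u : G) : Set G :=
  ((↑) : G → G ⧸ center G) ⁻¹' (zpowers (u : G ⧸ center G) \ {1})

theorem commute_of_mem_innerZeros {v m : G} (hv : v ∈ innerZeros u)
    (hm : m ∈ centralizer {u}) : Commute m v := by
  obtain ⟨k, hk⟩ := mem_zpowers_iff.mp hv.1
  have hz : (u ^ k)⁻¹ * v ∈ center G := QuotientGroup.eq.mp (by rw [QuotientGroup.mk_zpow, hk])
  have hmu : Commute m u := mem_centralizer_singleton_iff.mp hm
  simpa using (hmu.zpow_right k).mul_right (mem_center_iff.mp hz m)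

theorem disjoint_outerZeros_innerZeros (u : G) : Disjoint (outerZeros u) (innerZeros u) := by
  rw [outerZeros, Set.disjoint_compl_left_iff_subset]
  intro v hv
  exact mem_centralizer_singleton_iff.mpr
    (commute_of_mem_innerZeros hv (mem_centralizer_singleton_iff.mpr rfl)).symm

namespace IsCentralOfOrderModCenter

theorem isConjInvariant_innerZeros (hu : IsCentralOfOrderModCenter p u) :
    IsConjInvariant (innerZeros u) := by
  intro v w hvw hv
  obtain ⟨g, rfl⟩ := isConj_iff.mp hvw
  have hcentral : (v : G ⧸ center G) ∈ center (G ⧸ center G) :=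
    zpowers_le.mpr hu.mk_mem_center hv.1
  have hmk : ((g * v * g⁻¹ : G) : G ⧸ center G) = v := by
    rw [QuotientGroup.mk_mul, QuotientGroup.mk_mul, QuotientGroup.mk_inv,
      mem_center_iff.mp hcentral, mul_inv_cancel_right]
  rwa [innerZeros, Set.mem_preimage, hmk]

theorem ncard_innerZeros [Finite G] (hu : IsCentralOfOrderModCenter p u) :
    (innerZeros u).ncard = Nat.card (center G) * (p - 1) := by
  rw [← Nat.card_coe_set_eq, innerZeros, QuotientGroup.card_preimage_mk, Nat.card_coe_set_eq,
    Set.ncard_sdiff_singleton_of_mem (one_mem _), ← Nat.card_coe_set_eq, SetLike.coe_sort_coe,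
    Nat.card_zpowers, hu.orderOf_mk]

variable [hp : Fact p.Prime]

theorem of_mem_innerZeros (hu : IsCentralOfOrderModCenter p u) {v : G}
    (hv : v ∈ innerZeros u) : IsCentralOfOrderModCenter p v where
  mk_mem_center := zpowers_le.mpr hu.mk_mem_center hv.1
  orderOf_mk := by
    have hdvd := orderOf_dvd_of_mem_zpowers hv.1
    rw [hu.orderOf_mk] at hdvd
    exact (hp.out.eq_one_or_self_of_dvd _ hdvd).resolve_left (mt orderOf_eq_one_iff.mp hv.2)

theorem union_subset_of_forall_isCentrallyShifted (hu : IsCentralOfOrderModCenter p u) {N : Set G}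
    (hN : ∀ x, IsCentrallyShifted x → x ∈ N) : outerZeros u ∪ innerZeros u ⊆ N :=
  Set.union_subset (fun x hx ↦ hN x (hu.isCentrallyShifted_of_notMem_centralizer hx))
    fun x hx ↦ hN x (hu.of_mem_innerZeros hx).isCentrallyShifted

variable [Finite G] [IsCyclic (center G)]

theorem isConjInvariant_outerZeros (hG : IsPGroup p G) (hu : IsCentralOfOrderModCenter p u) :
    IsConjInvariant (outerZeros u) :=
  have := normal_of_index_eq_prime hG (hu.index_centralizer hG)
  (IsConjInvariant.coe_normal _).compl

theorem mul_ncard_image_mk_innerZeros (hG : IsPGroup p G) (hu : IsCentralOfOrderModCenter p u) :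
    p * (ConjClasses.mk '' innerZeros u).ncard = (innerZeros u).ncard := by
  have hclass : ∀ v ∈ innerZeros u, (ConjClasses.mk v).carrier.ncard = p := fun v hv ↦
    (ncard_carrier_mk v).trans ((hu.of_mem_innerZeros hv).index_centralizer hG)
  refine le_antisymm ?_ (ncard_le_mul_ncard_image_mk fun v hv ↦ (hclass v hv).le)
  exact hu.isConjInvariant_innerZeros.mul_ncard_image_mk_le fun v hv ↦ (hclass v hv).ge

theorem ncard_image_mk_union (hG : IsPGroup p G) (hu : IsCentralOfOrderModCenter p u) :
    (ConjClasses.mk '' (outerZeros u ∪ innerZeros u)).ncard =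
      (ConjClasses.mk '' outerZeros u).ncard + (ConjClasses.mk '' innerZeros u).ncard := by
  rw [Set.image_union, Set.ncard_union_eq]
  exact (hu.isConjInvariant_outerZeros hG).disjoint_image_mk (disjoint_outerZeros_innerZeros u)

theorem ncard_outerZeros (hcard : Nat.card G = p ^ n) (hu : IsCentralOfOrderModCenter p u) :
    (outerZeros u).ncard = p ^ n - p ^ (n - 1) := by
  have hn : n ≠ 0 := (zero_lt_two.trans_le (two_le_of_notMem_center hcard hu.notMem_center)).ne'
  have hM : Nat.card (centralizer {u}) = p ^ (n - 1) := by
    refine Nat.eq_of_mul_eq_mul_right hp.out.pos ?_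
    rw [pow_sub_one_mul hn, ← hcard, ← card_mul_index (centralizer {u}),
      hu.index_centralizer (.of_card hcard)]
  rw [outerZeros, Set.ncard_compl, hcard, ← Nat.card_coe_set_eq, SetLike.coe_sort_coe, hM]

theorem ncard_union (hcard : Nat.card G = p ^ n) (hu : IsCentralOfOrderModCenter p u) :
    (outerZeros u ∪ innerZeros u).ncard = p ^ n - p ^ (n - 1) + Nat.card (center G) * (p - 1) := by
  rw [Set.ncard_union_eq (disjoint_outerZeros_innerZeros u), hu.ncard_outerZeros hcard,
    hu.ncard_innerZeros]

theorem mul_sub_one_le_ncard_image_mk_outerZeros (hcard : Nat.card G = p ^ n)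
    (hu : IsCentralOfOrderModCenter p u) :
    p * (p - 1) ≤ (ConjClasses.mk '' outerZeros u).ncard := by
  have hn := two_le_of_notMem_center hcard hu.notMem_center
  refine le_of_mul_le_mul_left ?_ (Nat.pow_pos (n := n - 2) hp.out.pos)
  rw [← pow_sub_pow_sub_one_eq_mul p hn, ← hu.ncard_outerZeros hcard]
  refine ncard_le_mul_ncard_image_mk fun y hy ↦ ncard_carrier_le_of_notMem_center hcard fun hyZ ↦ ?_
  exact hy (center_le_centralizer _ hyZ)

theorem ncard_image_mk_outerZeros (hcard : Nat.card G = p ^ n)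
    (hu : IsCentralOfOrderModCenter p u) (hZ : Nat.card (center G) = p)
    (hcomm : centralizer {u} ≤ centralizer (centralizer {u} : Set G)) :
    (ConjClasses.mk '' outerZeros u).ncard = p * (p - 1) := by
  refine le_antisymm ?_ (hu.mul_sub_one_le_ncard_image_mk_outerZeros hcard)
  have hn := two_le_of_notMem_center hcard hu.notMem_center
  have hG : IsPGroup p G := .of_card hcard
  have hM := hu.index_centralizer hG
  have hclass : ∀ y ∈ outerZeros u, p ^ (n - 2) ≤ (ConjClasses.mk y).carrier.ncard := by
    intro y hy
    have hindex := index_center_le_ncard_carrier_mul_index (hM ▸ hp.out) hcomm hy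
    rw [hM] at hindex
    refine le_of_mul_le_mul_left ?_ (Nat.pow_pos (n := 2) hp.out.pos)
    calc p ^ 2 * p ^ (n - 2) = p * (center G).index := by
          rw [pow_mul_pow_sub p hn, ← hcard, ← card_mul_index (center G), hZ]
      _ ≤ p * ((ConjClasses.mk y).carrier.ncard * p) := Nat.mul_le_mul_left p hindex
      _ = p ^ 2 * (ConjClasses.mk y).carrier.ncard := by ring
  refine le_of_mul_le_mul_left ?_ (Nat.pow_pos (n := n - 2) hp.out.pos)
  rw [← pow_sub_pow_sub_one_eq_mul p hn, ← hu.ncard_outerZeros hcard]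
  exact (hu.isConjInvariant_outerZeros hG).mul_ncard_image_mk_le hclass

theorem centralizer_le_centralizer_of_forall_isCentrallyShifted (hG : IsPGroup p G)
    (hu : IsCentralOfOrderModCenter p u)
    (hshift : ∀ x, IsCentrallyShifted x → x ∈ outerZeros u ∪ innerZeros u) :
    centralizer {u} ≤ centralizer (centralizer {u} : Set G) := by
  have := hG.isNilpotent
  have := normal_of_index_eq_prime hG (hu.index_centralizer hG)
  refine le_centralizer_of_forall_isCentrallyShifted fun x hxM hx ↦ ?_
  have hx_inner : x ∈ innerZeros u := (hshift x hx).resolve_left fun hx_outer ↦ hx_outer hxM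
  exact mem_centralizer_iff.mpr fun m hm ↦ commute_of_mem_innerZeros hx_inner hm

theorem ncard_eq_iff (hcard : Nat.card G = p ^ n) (hu : IsCentralOfOrderModCenter p u)
    {N : Set G} (hN : outerZeros u ∪ innerZeros u ⊆ N) :
    N.ncard = p ^ n - p ^ (n - 1) + p ^ 2 - p ↔
      N = outerZeros u ∪ innerZeros u ∧ Nat.card (center G) = p := by
  have hp1 : 0 < p - 1 := Nat.sub_pos_of_lt hp.out.one_lt
  have htarget : p ^ n - p ^ (n - 1) + p ^ 2 - p = p ^ n - p ^ (n - 1) + p * (p - 1) := by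
    rw [Nat.add_sub_assoc (Nat.le_self_pow two_ne_zero p), sq, Nat.mul_sub_one]
  have hunion := hu.ncard_union hcard
  have hZ : p * (p - 1) ≤ Nat.card (center G) * (p - 1) :=
    Nat.mul_le_mul_right _ (le_card_center_of_notMem_center (.of_card hcard) hu.notMem_center)
  rw [htarget]
  constructor
  · intro hNcard
    obtain rfl : outerZeros u ∪ innerZeros u = N :=
      Set.eq_of_subset_of_ncard_le hN (by rw [hNcard, hunion]; lia)
    rw [hunion] at hNcard
    exact ⟨rfl, Nat.eq_of_mul_eq_mul_right hp1 (Nat.add_left_cancel hNcard)⟩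
  · rintro ⟨rfl, hZp⟩
    rw [hunion, hZp]

theorem ncard_image_mk_eq_iff (hcard : Nat.card G = p ^ n) (hu : IsCentralOfOrderModCenter p u)
    {N : Set G} (hN : ∀ x, IsCentrallyShifted x → x ∈ N) :
    (ConjClasses.mk '' N).ncard = p ^ 2 - 1 ↔
      N = outerZeros u ∪ innerZeros u ∧ Nat.card (center G) = p := by
  have hG : IsPGroup p G := .of_card hcard
  have hp1 : 0 < p - 1 := Nat.sub_pos_of_lt hp.out.one_lt
  have htarget : p ^ 2 - 1 = p * (p - 1) + (p - 1) := by
    rw [← Nat.succ_mul, Nat.succ_eq_add_one, ← one_pow 2, Nat.sq_sub_sq, one_pow]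
  have hunion := hu.ncard_image_mk_union hG
  have hinner : p * (ConjClasses.mk '' innerZeros u).ncard = Nat.card (center G) * (p - 1) :=
    (hu.mul_ncard_image_mk_innerZeros hG).trans hu.ncard_innerZeros
  rw [htarget]
  constructor
  · intro hNcard
    have hsub := hu.union_subset_of_forall_isCentrallyShifted hN
    have houter_le := hu.mul_sub_one_le_ncard_image_mk_outerZeros hcard
    have hinner_le : p - 1 ≤ (ConjClasses.mk '' innerZeros u).ncard := by
      refine le_of_mul_le_mul_left ?_ hp.out.pos
      rw [hinner]
      exact Nat.mul_le_mul_right _ (le_card_center_of_notMem_center hG hu.notMem_center)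
    have himage : ConjClasses.mk '' (outerZeros u ∪ innerZeros u) = ConjClasses.mk '' N :=
      Set.eq_of_subset_of_ncard_le (Set.image_mono hsub) (by rw [hNcard, hunion]; lia)
    have hinv := (hu.isConjInvariant_outerZeros hG).union hu.isConjInvariant_innerZeros
    refine ⟨subset_antisymm (fun x hx ↦ hinv.mem_of_mk_mem_image ?_) hsub, ?_⟩
    · exact himage ▸ Set.mem_image_of_mem _ hx
    · have hinner_eq : (ConjClasses.mk '' innerZeros u).ncard = p - 1 := by
        rw [← himage, hunion] at hNcard; lia
      rw [hinner_eq] at hinner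
      exact (Nat.eq_of_mul_eq_mul_right hp1 hinner).symm
  · rintro ⟨rfl, hZ⟩
    have hcomm := hu.centralizer_le_centralizer_of_forall_isCentrallyShifted hG hN
    rw [hunion, hu.ncard_image_mk_outerZeros hcard hZ hcomm, Nat.add_left_cancel_iff]
    rw [hZ] at hinner
    exact Nat.eq_of_mul_eq_mul_left hp.out.pos hinner

end IsCentralOfOrderModCenter

theorem ncard_eq_iff_ncard_image_mk_eq [Finite G] [Fact p.Prime] [IsCyclic (center G)]
    (hcard : Nat.card G = p ^ n) (hna : center G ≠ ⊤) {N : Set G}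
    (hN : ∀ x, IsCentrallyShifted x → x ∈ N) :
    N.ncard = p ^ n - p ^ (n - 1) + p ^ 2 - p ↔ (ConjClasses.mk '' N).ncard = p ^ 2 - 1 := by
  obtain ⟨u, hu⟩ := exists_isCentralOfOrderModCenter (.of_card hcard) hna
  rw [hu.ncard_eq_iff hcard (hu.union_subset_of_forall_isCentrallyShifted hN),
    hu.ncard_image_mk_eq_iff hcard hN]

end ForcedZeros

section Characters

variable {k : Type*} [Field k] {G : Type*} [Group G]

theorem nontrivial_of_simple_fdRep (V : FDRep k G) [Simple V] : Nontrivial V := by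
  by_contra h
  rw [not_nontrivial_iff_subsingleton] at h
  refine id_nonzero V (Action.Hom.ext (InducedCategory.hom_ext (ModuleCat.hom_ext ?_)))
  exact LinearMap.ext fun x ↦ Subsingleton.elim _ _

variable [IsAlgClosed k] (V : FDRep k G) [Simple V]

theorem exists_ρ_eq_smul_one {z : G} (hz : z ∈ center G) : ∃ c : k, V.ρ z = c • 1 := by
  let f : V ⟶ V := ⟨Action.ρ V z, fun g ↦ by
    have hcomm := congrArg (Action.ρ V) (mem_center_iff.mp hz g).symm
    rw [map_mul, map_mul] at hcomm
    exact hcomm⟩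
  obtain ⟨c, hc⟩ := endomorphism_simple_eq_smul_id k f
  exact ⟨c, congrArg (fun φ : V ⟶ V ↦ φ.hom.hom.hom) hc.symm⟩

theorem exists_centralCharacter : ∃ ω : center G →* k, ∀ z : center G, V.ρ z = ω z • 1 := by
  have := nontrivial_of_simple_fdRep V
  choose ω hω using fun z : center G ↦ exists_ρ_eq_smul_one V z.2
  have hinj : Function.Injective fun c : k ↦ c • (1 : V →ₗ[k] V) :=
    smul_left_injective k one_ne_zero
  refine ⟨⟨⟨ω, hinj ?_⟩, fun z w ↦ hinj ?_⟩, hω⟩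
  · simp [← hω]
  · change ω (z * w) • 1 = (ω z * ω w) • 1
    rw [← hω, coe_mul, map_mul, hω, hω, smul_mul_smul_comm, one_mul]

variable {V}

theorem isCyclic_center_of_faithful [Finite G] (hV : Function.Injective V.ρ) :
    IsCyclic (center G) := by
  obtain ⟨ω, hω⟩ := exists_centralCharacter V
  refine isCyclic_of_injective_ringHom ω fun z w hzw ↦ Subtype.ext (hV ?_)
  rw [hω, hω, hzw]

theorem character_eq_zero_of_isCentrallyShifted (hV : Function.Injective V.ρ) {x : G}
    (hx : IsCentrallyShifted x) : V.character x = 0 := by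
  obtain ⟨g, hz, hz1⟩ := hx
  obtain ⟨c, hc⟩ := exists_ρ_eq_smul_one V hz
  have hconj : ⁅g, x⁆ * x = g * x * g⁻¹ := by rw [commutatorElement_def]; group
  have hscale : c * V.character x = V.character x :=
    calc c * V.character x = V.character (⁅g, x⁆ * x) := by simp [FDRep.character, hc]
      _ = V.character x := by rw [hconj, V.char_conj]
  by_contra hne
  have hc1 : c = 1 := (mul_eq_right₀ hne).mp hscale
  exact hz1 (hV (by rw [hc, hc1, one_smul, map_one]))

end Characters

theorem stmt9_general {k : Type*} [Field k] [IsAlgClosed k] {G : Type*} [Group G] [Finite G]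
    {p n : ℕ} (hp : p.Prime) (hG : Nat.card G = p ^ n) (hna : ¬ ∀ x y : G, x * y = y * x)
    (V : FDRep k G) (hV : Simple V) (hfaithful : Function.Injective ⇑V.ρ) :
    {g : G | V.character g = 0}.ncard = p ^ n - p ^ (n - 1) + p ^ 2 - p ↔
      (ConjClasses.mk '' {g : G | V.character g = 0}).ncard = p ^ 2 - 1 := by
  have : Fact p.Prime := ⟨hp⟩
  have : IsCyclic (center G) := isCyclic_center_of_faithful hfaithful
  have hcenter : center G ≠ ⊤ := fun h ↦
    hna fun x y ↦ mem_center_iff.mp (h ▸ mem_top y : y ∈ center G) x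
  exact ncard_eq_iff_ncard_image_mk_eq hG hcenter fun x hx ↦
    character_eq_zero_of_isCentrallyShifted hfaithful hx

/-- Let `G` be a non-abelian `p`-group of order `p^n` and `χ` a faithful
irreducible complex character of `G`. Then `χ` vanishes at exactly `p^n - p^(n-1) + p^2 - p`
elements of `G` if and only if its set of zeros consists of exactly `p^2 - 1` conjugacy
classes of `G`. -/
theorem stmt9 {G : Type} [Group G] [Fintype G] {p n : ℕ} (hp : p.Prime)
    (hG : Fintype.card G = p ^ n)
    (hna : ¬ ∀ x y : G, x * y = y * x)
    (V : FDRep ℂ G) (hV : Simple V)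
    (hfaithful : Function.Injective ⇑V.ρ) :
    {g : G | V.character g = 0}.ncard = p ^ n - p ^ (n - 1) + p ^ 2 - p ↔
      (ConjClasses.mk '' {g : G | V.character g = 0}).ncard = p ^ 2 - 1 := by
  exact stmt9_general hp (Nat.card_eq_fintype_card.trans hG) hna V hV hfaithful
end
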